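/- arXiv:2302.05270 — 2 statements merged into one kernel-verified Lean document; each statement's English description precedes it below -/
import Mathlib

section
/- Let G and M be types, f : G → M surjective, and consider the nominal formal context (G, M, r) with r g m ↔ f g = m. If there exist m₁ m₂ : M with m₁ ≠ m₂, then the concept lattice `Concept G M r` is atomistic: every concept is the supremum of the atoms below it. -/
open Set

/-- The concept lattice of the nominal context of a surjective classification map `f : G → M`
with at least two classes is atomistic. -/
theorem stmt_2 {G M : Type*} [Nonempty M] (f : G → M) (hf : Function.Surjective f)
    (m₁ m₂ : M) (hm : m₁ ≠ m₂) :
    IsAtomistic (Concept G M (fun g m => f g = m)) := by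
  have key : ∀ (c : Concept G M (fun g m => f g = m)) (g h : G), f g = f h →
      h ∈ c.extent → g ∈ c.extent := by
    intro c g h hgh hh
    rw [← c.lowerPolar_intent]
    intro m hmem
    exact hgh.trans (Concept.rel_extent_intent (r := fun g m => f g = m) (c := c) hh hmem)
  refine ⟨fun b => ⟨{c | ∃ g ∈ b.extent, c = Concept.ofObjects _ {g}}, ⟨?_, ?_⟩, ?_⟩⟩
  · rintro c ⟨g, hg, rfl⟩
    exact Concept.ofObjects_le_iff.2 (singleton_subset_iff.2 hg)
  · intro d hd
    rw [← Concept.extent_subset_extent_iff]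
    intro g hg
    exact Concept.ofObjects_le_iff.1 (hd ⟨g, hg, rfl⟩) rfl
  · rintro c ⟨g, hg, rfl⟩
    refine ⟨?_, ?_⟩
    · intro h0
      have h1 : g ∈ (⊥ : Concept G M (fun g m => f g = m)).extent :=
        Concept.ofObjects_le_iff.1 h0.le rfl
      have h2 : ∀ m, f g = m := fun m => h1 (mem_univ m)
      exact hm ((h2 m₁).symm.trans (h2 m₂))
    · intro c hc
      refine le_bot_iff.1 (Concept.extent_subset_extent_iff.1 fun h hh => ?_)
      exfalso
      have h1 : f h = f g := by
        have h2 := Concept.extent_subset_extent_iff.2 hc.le hh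
        exact h2 (fun a (ha : a = g) => by rw [ha])
      exact hc.not_ge (Concept.ofObjects_le_iff.2 (singleton_subset_iff.2 (key c g h h1.symm hh)))
end

section
/- Let G and M be types with M nonempty, W a linear order with at least two distinct elements, and val : G → M → W. Consider the interordinal formal context (G, M × Bool × W, r) with r g (m, true, v) ↔ val g m ≤ v and r g (m, false, v) ↔ v ≤ val g m. Then the concept lattice `Concept G (M × Bool × W) r` is atomistic: every concept is the supremum of the atoms below it. -/
open Set

/-- The relation of the interordinally scaled context of a complete many-valued context with
values `val : G → M → W`: attributes are triples `(m, b, v)`, where `(m, true, v)` means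
`m : ≤ v` and `(m, false, v)` means `m : ≥ v`. -/
def interRel {G M W : Type*} [LinearOrder W] (val : G → M → W) :
    G → M × Bool × W → Prop :=
  fun g x =>
    match x with
    | (m, true, v) => val g m ≤ v
    | (m, false, v) => v ≤ val g m

theorem stmt_9 {G M W : Type*} [Nonempty M] [LinearOrder W]
    (w₁ w₂ : W) (hw : w₁ ≠ w₂) (val : G → M → W) :
    IsAtomistic (Concept G (M × Bool × W) (interRel val)) := by
  -- every object of an object concept has the same values as the generating object
  have hval : ∀ (g h : G), h ∈ (Concept.ofObjects (interRel val) {g}).extent →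
      val h = val g := by
    intro g h hh
    have key : ∀ x, interRel val g x → interRel val h x := by
      intro x hx
      refine Concept.rel_extent_intent hh ?_
      change x ∈ upperPolar (interRel val) {g}
      rw [mem_upperPolar_singleton]
      exact hx
    funext m
    exact le_antisymm (key (m, true, val g m) (le_refl (val g m)))
      (key (m, false, val g m) (le_refl (val g m)))
  -- the bottom concept has empty extent
  have hbot : ∀ g : G, g ∉ (⊥ : Concept G (M × Bool × W) (interRel val)).extent := by
    intro g hg
    obtain ⟨m⟩ := ‹Nonempty M›
    have key : ∀ x, interRel val g x := fun x => Concept.rel_extent_intent hg (mem_univ x)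
    have a1 : val g m ≤ w₁ := key (m, true, w₁)
    have a2 : val g m ≤ w₂ := key (m, true, w₂)
    have b1 : w₁ ≤ val g m := key (m, false, w₁)
    have b2 : w₂ ≤ val g m := key (m, false, w₂)
    exact hw (le_antisymm (b1.trans a2) (b2.trans a1))
  have hmem : ∀ g : G, g ∈ (Concept.ofObjects (interRel val) {g}).extent := fun g =>
    Concept.ofObjects_le_iff.1 le_rfl (mem_singleton g)
  have hatom : ∀ g : G, IsAtom (Concept.ofObjects (interRel val) {g}) := by
    intro g
    refine ⟨fun h => hbot g (h ▸ hmem g), fun c hc => ?_⟩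
    rw [eq_bot_iff, ← Concept.extent_subset_extent_iff]
    intro h hh
    exfalso
    refine hc.not_ge (Concept.ofObjects_le_iff.2 (singleton_subset_iff.2 ?_))
    have hv := hval g h (Concept.extent_subset_extent_iff.2 hc.le hh)
    rw [← c.lowerPolar_intent, mem_lowerPolar_iff]
    rintro ⟨m, b, v⟩ hx
    have := Concept.rel_extent_intent hh hx
    cases b <;> simpa only [interRel, hv] using this
  refine ⟨fun c => ⟨(fun g => Concept.ofObjects (interRel val) {g}) '' c.extent, ⟨?_, ?_⟩, ?_⟩⟩
  · rintro _ ⟨g, hg, rfl⟩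
    exact Concept.ofObjects_le_iff.2 (singleton_subset_iff.2 hg)
  · intro d hd
    rw [← Concept.extent_subset_extent_iff]
    intro g hg
    exact Concept.ofObjects_le_iff.1 (hd ⟨g, hg, rfl⟩) (mem_singleton g)
  · rintro _ ⟨g, _, rfl⟩
    exact hatom g
end
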